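/- arXiv:1104.2755 — 3 statements merged into one kernel-verified Lean document; each statement's English description precedes it below -/
import Mathlib

section
/- Let X be a path-connected topological space and let A ⊆ X × X be a nonempty subspace. Then the following are equivalent: (1) TC_X(A) = 1; (2) the two projections p₁, p₂ : A → X (restrictions of the coordinate projections of X × X) are homotopic; (3) the inclusion A ↪ X × X is homotopic to a map taking values in the diagonal Δ(X) = {(x,x) : x ∈ X} ⊆ X × X. -/
open Set

/-- A continuous local section of the free path fibration `π : C([0,1],X) → X × X`,
`π(γ) = (γ 0, γ 1)`, over a subset `S ⊆ X × X`. -/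
def PathSecOn (X : Type*) [TopologicalSpace X] (S : Set (X × X)) : Prop :=
  ∃ s : C(S, C(unitInterval, X)),
    ∀ p : S, (s p) 0 = (p : X × X).1 ∧ (s p) 1 = (p : X × X).2

/-- Subspace topological complexity `TC_X(A)` for `A ⊆ X × X`, valued in `ℕ∞`:
the least `k` such that `A` is covered by `k` sets open in `A`, each admitting a
continuous local section of the free path fibration. -/
noncomputable def subTC (X : Type*) [TopologicalSpace X] (A : Set (X × X)) : ℕ∞ :=
  sInf {n : ℕ∞ | ∃ k : ℕ, n = k ∧ ∃ U : Fin k → Set (X × X),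
    (∀ i, ∃ V, IsOpen V ∧ U i = V ∩ A) ∧ (A ⊆ ⋃ i, U i) ∧ ∀ i, PathSecOn X (U i)}

/-- Topological complexity `TC(X) = TC_X(X × X)`. -/
noncomputable def TopComplexity (X : Type*) [TopologicalSpace X] : ℕ∞ :=
  subTC X Set.univ

/-- Subspace Lusternik–Schnirelmann category `cat_X(B)` for `B ⊆ X`, valued in `ℕ∞`:
the least `k` such that `B` is covered by `k` sets open in `B`, each of whose
inclusions into `X` is null-homotopic. -/
noncomputable def subCat (X : Type*) [TopologicalSpace X] (B : Set X) : ℕ∞ :=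
  sInf {n : ℕ∞ | ∃ k : ℕ, n = k ∧ ∃ U : Fin k → Set X,
    (∀ i, ∃ V, IsOpen V ∧ U i = V ∩ B) ∧ (B ⊆ ⋃ i, U i) ∧
    ∀ i, ∃ x₀ : X, ContinuousMap.Homotopic
      (⟨fun u : U i => (u : X), continuous_subtype_val⟩ : C(U i, X))
      (ContinuousMap.const _ x₀)}

/-- Lusternik–Schnirelmann category `cat(X) = cat_X(X)`. -/
noncomputable def LSCat (X : Type*) [TopologicalSpace X] : ℕ∞ :=
  subCat X Set.univ

/-!
By the exponential law (`[0,1]` is locally compact), a section of the path fibration over `A` is a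
homotopy between the two projections `A → X`. A map `F : Y → Z × Z` deforms into the diagonal iff
its coordinates are homotopic: keep one coordinate fixed and move the other one onto it; conversely,
follow the first coordinate of a deformation into the diagonal and come back along the second.
-/

section Homotopy

open ContinuousMap

variable {Y Z : Type*} [TopologicalSpace Y] [TopologicalSpace Z]

theorem homotopic_iff_exists_path_family {f g : C(Y, Z)} :
    f.Homotopic g ↔ ∃ s : C(Y, C(unitInterval, Z)), ∀ y, s y 0 = f y ∧ s y 1 = g y := by
  constructor
  · rintro ⟨H⟩
    exact ⟨(H.toContinuousMap.comp prodSwap).curry, fun y ↦ ⟨H.map_zero_left y, H.map_one_left y⟩⟩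
  · rintro ⟨s, hs⟩
    exact ⟨⟨s.uncurry.comp prodSwap, fun y ↦ (hs y).1, fun y ↦ (hs y).2⟩⟩

theorem homotopic_fst_snd_iff_exists_mem_diagonal {F : C(Y, Z × Z)} :
    (fst.comp F).Homotopic (snd.comp F) ↔
      ∃ f : C(Y, Z × Z), (∀ y, f y ∈ diagonal Z) ∧ F.Homotopic f := by
  constructor
  · intro h
    exact ⟨(fst.comp F).prodMk (fst.comp F), fun _ ↦ rfl,
      (Homotopic.refl (fst.comp F)).prodMk h.symm⟩
  · rintro ⟨f, hf, hFf⟩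
    have coords_eq : fst.comp f = snd.comp f := ContinuousMap.ext hf
    have fst_homotopic : (fst.comp F).Homotopic (fst.comp f) := (Homotopic.refl fst).comp hFf
    have snd_homotopic : (snd.comp F).Homotopic (snd.comp f) := (Homotopic.refl snd).comp hFf
    exact (coords_eq ▸ fst_homotopic).trans snd_homotopic.symm

end Homotopy

section PathSections

variable {X : Type*} [TopologicalSpace X] {A : Set (X × X)} {m n : ℕ}

theorem pathSecOn_iff_homotopic :
    PathSecOn X A ↔
      (ContinuousMap.fst.comp (.restrict A (.id (X × X)))).Homotopic
        (ContinuousMap.snd.comp (.restrict A (.id (X × X)))) := by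
  rw [homotopic_iff_exists_path_family]
  rfl

variable (X) in
theorem pathSecOn_empty : PathSecOn X ∅ :=
  ⟨⟨isEmptyElim, continuous_of_discreteTopology⟩, isEmptyElim⟩

/-- `A` is covered by `n` relatively open, possibly empty, subsets that carry sections of the path
fibration: the condition whose least solution `n` is `subTC X A`. -/
def HasPathSecCover (A : Set (X × X)) (n : ℕ) : Prop :=
  ∃ U : Fin n → Set (X × X),
    (∀ i, ∃ V, IsOpen V ∧ U i = V ∩ A) ∧ (A ⊆ ⋃ i, U i) ∧ ∀ i, PathSecOn X (U i)

theorem HasPathSecCover.succ (h : HasPathSecCover A n) : HasPathSecCover A (n + 1) := by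
  obtain ⟨U, hopen, hcover, hsec⟩ := h
  refine ⟨Fin.cons ∅ U, Fin.cases ⟨∅, isOpen_empty, (empty_inter A).symm⟩ hopen, ?_,
    Fin.cases (pathSecOn_empty X) hsec⟩
  exact hcover.trans (iUnion_subset fun i ↦ subset_iUnion (Fin.cons ∅ U : Fin (n + 1) → _) i.succ)

theorem HasPathSecCover.mono (hmn : m ≤ n) (h : HasPathSecCover A m) : HasPathSecCover A n :=
  Nat.le_induction h (fun _ _ ↦ succ) n hmn

theorem hasPathSecCover_zero_iff : HasPathSecCover A 0 ↔ A = ∅ := by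
  simp [HasPathSecCover, subset_empty_iff]

theorem hasPathSecCover_one_iff : HasPathSecCover A 1 ↔ PathSecOn X A := by
  constructor
  · rintro ⟨U, hopen, hcover, hsec⟩
    obtain ⟨V, -, hV⟩ := hopen 0
    have hUA : U 0 = A :=
      (hV.trans_subset inter_subset_right).antisymm (by simpa [subset_def] using hcover)
    exact hUA ▸ hsec 0
  · intro h
    exact ⟨fun _ ↦ A, fun _ ↦ ⟨univ, isOpen_univ, (univ_inter A).symm⟩,
      subset_iUnion (fun _ : Fin 1 ↦ A) 0, fun _ ↦ h⟩

theorem subTC_le_natCast_iff : subTC X A ≤ n ↔ HasPathSecCover A n := by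
  constructor
  · intro h
    obtain ⟨_, ⟨m, rfl, hm⟩, hmn⟩ := sInf_lt_iff.1 (ENat.lt_natCast_add_one_iff.2 h)
    exact HasPathSecCover.mono (by exact_mod_cast ENat.lt_natCast_add_one_iff.1 hmn) hm
  · intro h
    exact sInf_le ⟨n, rfl, h⟩

theorem subTC_le_one_iff : subTC X A ≤ 1 ↔ PathSecOn X A := by
  rw [← hasPathSecCover_one_iff, ← subTC_le_natCast_iff, Nat.cast_one]

theorem one_le_subTC_iff : 1 ≤ subTC X A ↔ A.Nonempty := by
  rw [Order.one_le_iff_ne_zero, nonempty_iff_ne_empty, Ne, Ne, ← hasPathSecCover_zero_iff,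
    ← subTC_le_natCast_iff, Nat.cast_zero, nonpos_iff_eq_zero]

theorem subTC_eq_one_iff_pathSecOn (hA : A.Nonempty) : subTC X A = 1 ↔ PathSecOn X A := by
  rw [← subTC_le_one_iff, (one_le_subTC_iff.2 hA).ge_iff_eq']

end PathSections

theorem subTC_eq_one_iff_general {X : Type*} [TopologicalSpace X]
    (A : Set (X × X)) (hA : A.Nonempty) :
    (subTC X A = 1 ↔
      ContinuousMap.Homotopic
        (⟨fun a : A => (a : X × X).1, continuous_fst.comp continuous_subtype_val⟩ : C(A, X))
        (⟨fun a : A => (a : X × X).2, continuous_snd.comp continuous_subtype_val⟩ : C(A, X))) ∧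
    (subTC X A = 1 ↔
      ∃ f : C(A, X × X), (∀ a, f a ∈ Set.diagonal X) ∧
        ContinuousMap.Homotopic
          (⟨fun a : A => (a : X × X), continuous_subtype_val⟩ : C(A, X × X)) f) := by
  have hsec := (subTC_eq_one_iff_pathSecOn hA).trans pathSecOn_iff_homotopic
  exact ⟨hsec, hsec.trans homotopic_fst_snd_iff_exists_mem_diagonal⟩

/-- Farber's lemma: for a nonempty subspace `A ⊆ X × X` of the square of a path-connected
space `X`, the following are equivalent: (1) `TC_X(A) = 1`; (2) the two coordinate
projections `A → X` are homotopic; (3) the inclusion `A ↪ X × X` is homotopic to a map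
with values in the diagonal. -/
theorem subTC_eq_one_iff {X : Type*} [TopologicalSpace X] [PathConnectedSpace X]
    (A : Set (X × X)) (hA : A.Nonempty) :
    (subTC X A = 1 ↔
      ContinuousMap.Homotopic
        (⟨fun a : A => (a : X × X).1, continuous_fst.comp continuous_subtype_val⟩ : C(A, X))
        (⟨fun a : A => (a : X × X).2, continuous_snd.comp continuous_subtype_val⟩ : C(A, X))) ∧
    (subTC X A = 1 ↔
      ∃ f : C(A, X × X), (∀ a, f a ∈ Set.diagonal X) ∧
        ContinuousMap.Homotopic
          (⟨fun a : A => (a : X × X), continuous_subtype_val⟩ : C(A, X × X)) f) :=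
  subTC_eq_one_iff_general A hA
end

section
/- Let p : X̃ → X be a covering map with X̃ path-connected. Then TC(X̃) ≤ cat(X × X). -/
open Set

/-! The free path fibration has a section over `S ⊆ E × E` iff the two projections `S → E` are
homotopic. Let `P : E × E → B` be a covering map and `S = P ⁻¹' U` with `U → B` null-homotopic.
Lifting the null-homotopy deforms `S → E × E` into a map with values in a discrete fibre of `P`.
On that fibre the two projections to the path-connected space `E` are homotopic, hence so are they
on `S`. For the theorem, `P = p × p`. -/

section Homotopy

variable {D E B V : Type*} [TopologicalSpace D] [TopologicalSpace E] [TopologicalSpace B]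
  [TopologicalSpace V]

theorem homotopic_of_discreteTopology [DiscreteTopology D] [PathConnectedSpace E] (f g : C(D, E)) :
    f.Homotopic g := by
  let γ (d : D) : Path (f d) (g d) := PathConnectedSpace.somePath _ _
  exact ⟨{
    toFun q := γ q.2 q.1
    continuous_toFun := continuous_prod_of_discrete_right.2 fun d => (γ d).continuous
    map_zero_left d := (γ d).source
    map_one_left d := (γ d).target }⟩

theorem exists_homotopic_fiber_of_nullhomotopic_comp {p : E → B} (hp : IsCoveringMap p)
    (f : C(V, E)) (hf : (ContinuousMap.comp ⟨p, hp.continuous⟩ f).Nullhomotopic) :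
    ∃ (b : B) (g : C(V, p ⁻¹' {b})),
      f.Homotopic (((ContinuousMap.id E).restrict (p ⁻¹' {b})).comp g) := by
  obtain ⟨b, ⟨H⟩⟩ := hf
  let L := hp.liftHomotopy H.toContinuousMap f H.apply_zero
  have hpL : p ∘ L = H := hp.liftHomotopy_lifts _ _ _
  have hL (v : V) : p (L (1, v)) = b := (congrFun hpL (1, v)).trans (H.apply_one v)
  exact ⟨b, ⟨fun v => ⟨L (1, v), hL v⟩, by fun_prop⟩,
    ⟨{ L with
      map_zero_left := hp.liftHomotopy_zero _ _ _
      map_one_left := fun _ => rfl }⟩⟩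

end Homotopy

section CoveringProduct

variable {E E' B B' I I' : Type*} [TopologicalSpace E] [TopologicalSpace E'] [TopologicalSpace B]
  [TopologicalSpace B'] [TopologicalSpace I] [TopologicalSpace I'] {p : E → B} {q : E' → B'}

theorem isEvenlyCovered_prodMap {b : B} {b' : B'} (hp : IsEvenlyCovered p b I)
    (hq : IsEvenlyCovered q b' I') : IsEvenlyCovered (Prod.map p q) (b, b') (I × I') := by
  obtain ⟨_, U, hbU, hU, hpU, φ, hφ⟩ := hp
  obtain ⟨_, V, hbV, hV, hqV, ψ, hψ⟩ := hq
  let χ : (p ⁻¹' U) ×ˢ (q ⁻¹' V) ≃ₜ (U ×ˢ V) × (I × I') :=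
    (Homeomorph.Set.prod _ _).trans <| (φ.prodCongr ψ).trans <|
      (Homeomorph.prodProdProdComm U I V I').trans <|
        (Homeomorph.Set.prod U V).symm.prodCongr (.refl _)
  exact ⟨inferInstance, U ×ˢ V, ⟨hbU, hbV⟩, hU.prod hV, hpU.prod hqV, χ,
    fun _ => Prod.ext (hφ _) (hψ _)⟩

theorem isCoveringMap_prodMap (hp : IsCoveringMap p) (hq : IsCoveringMap q) :
    IsCoveringMap (Prod.map p q) :=
  fun b => (isEvenlyCovered_prodMap (hp b.1) (hq b.2)).to_isEvenlyCovered_preimage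

end CoveringProduct

section PathSection

variable {E B : Type*} [TopologicalSpace E] [TopologicalSpace B]

theorem pathSecOn_of_homotopic {S : Set (E × E)}
    (h : (ContinuousMap.fst.restrict S).Homotopic (ContinuousMap.snd.restrict S)) :
    PathSecOn E S := by
  obtain ⟨H⟩ := h
  exact ⟨(H.toContinuousMap.comp .prodSwap).curry, fun x => ⟨H.apply_zero x, H.apply_one x⟩⟩

theorem pathSecOn_preimage_of_nullhomotopic [PathConnectedSpace E] {P : E × E → B}
    (hP : IsCoveringMap P) {U : Set B}
    (hU : ((ContinuousMap.id B).restrict U).Nullhomotopic) :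
    PathSecOn E (P ⁻¹' U) := by
  let ι : C(P ⁻¹' U, E × E) := (ContinuousMap.id _).restrict _
  have hPι : (ContinuousMap.comp ⟨P, hP.continuous⟩ ι).Nullhomotopic :=
    hU.comp_left (ContinuousMap.restrictPreimage ⟨P, hP.continuous⟩ U)
  obtain ⟨b, g, hιg⟩ := exists_homotopic_fiber_of_nullhomotopic_comp hP ι hPι
  have : DiscreteTopology (P ⁻¹' {b}) := (hP b).discreteTopology_fiber
  have hfiber : (ContinuousMap.fst.restrict (P ⁻¹' {b})).Homotopic
      (ContinuousMap.snd.restrict (P ⁻¹' {b})) := homotopic_of_discreteTopology _ _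
  have hfst : (ContinuousMap.fst.comp ι).Homotopic
      ((ContinuousMap.fst.restrict (P ⁻¹' {b})).comp g) := .comp (.refl .fst) hιg
  have hsnd : (ContinuousMap.snd.comp ι).Homotopic
      ((ContinuousMap.snd.restrict (P ⁻¹' {b})).comp g) := .comp (.refl .snd) hιg
  exact pathSecOn_of_homotopic <| (hfst.trans (hfiber.comp (.refl g))).trans hsnd.symm

end PathSection

/-- The covering `P` need not be a product: it may for instance be the quotient of `E × E` by the
diagonal action of a group that acts freely and properly discontinuously on `E`. -/
theorem topComplexity_le_lsCat_sq_of_coveringMap_general {E B : Type*} [TopologicalSpace E]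
    [TopologicalSpace B] [PathConnectedSpace E] {P : E × E → B} (hP : IsCoveringMap P)
    (A : Set B) : subTC E (P ⁻¹' A) ≤ subCat B A := by
  refine le_sInf ?_
  rintro _ ⟨k, rfl, U, hU, hAU, hnull⟩
  refine sInf_le ⟨k, rfl, fun i => P ⁻¹' U i, fun i => ?relOpen, ?covers,
    fun i => pathSecOn_preimage_of_nullhomotopic hP (hnull i)⟩
  case relOpen =>
    obtain ⟨V, hV, hUV⟩ := hU i
    exact ⟨P ⁻¹' V, hV.preimage hP.continuous, congrArg (P ⁻¹' ·) hUV⟩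
  case covers => simpa only [preimage_iUnion] using preimage_mono hAU

/-- If `p : X̃ → X` is a covering map with `X̃` path-connected, then
`TC(X̃) ≤ cat(X × X)`. -/
theorem topComplexity_le_lsCat_sq_of_coveringMap {X' X : Type*} [TopologicalSpace X']
    [TopologicalSpace X] [PathConnectedSpace X'] (p : X' → X)
    (hp : IsCoveringMap p) (hsurj : Function.Surjective p) :
    TopComplexity X' ≤ LSCat (X × X) := by
  exact topComplexity_le_lsCat_sq_of_coveringMap_general (isCoveringMap_prodMap hp hp) univ
end

section
/- Let n ≤ r be positive integers and let Pⁿ denote real projective n-space. Suppose there exists an axial map a : Pⁿ × Pⁿ → P^r, i.e. a continuous map whose restriction to each factor {*} × Pⁿ and Pⁿ × {*} is homotopic to the standard inclusion Pⁿ ↪ P^r induced by the linear inclusion ℝ^{n+1} ⊆ ℝ^{r+1}. Then TC(Pⁿ) ≤ r + 1. -/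
open Set

/-- Real projective `n`-space: the quotient of `ℝ^{n+1} \ {0}` by the scalar action of
`ℝ \ {0}`. -/
def RealProj (n : ℕ) : Type :=
  Quot (fun v w : {x : Fin (n + 1) → ℝ // x ≠ 0} =>
    ∃ c : ℝ, c ≠ 0 ∧ c • (v : Fin (n + 1) → ℝ) = (w : Fin (n + 1) → ℝ))

instance (n : ℕ) : TopologicalSpace (RealProj n) :=
  inferInstanceAs (TopologicalSpace (Quot _))

/-- Extension by zero `ℝ^{n+1} → ℝ^{r+1}`. -/
def extVec (n r : ℕ) (x : Fin (n + 1) → ℝ) : Fin (r + 1) → ℝ :=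
  fun j => if h : (j : ℕ) < n + 1 then x ⟨(j : ℕ), h⟩ else 0

/-- The standard inclusion `Pⁿ ↪ P^r` induced by the linear inclusion
`ℝ^{n+1} ⊆ ℝ^{r+1}`. -/
def projIncl (n r : ℕ) (h : n ≤ r) : RealProj n → RealProj r :=
  Quot.map
    (fun v => ⟨extVec n r v.1, fun hz => v.2 (funext fun i => by
      have hi : (i : ℕ) < r + 1 := lt_of_lt_of_le i.2 (by omega)
      have h2 := congrFun hz ⟨(i : ℕ), hi⟩
      simpa [extVec, i.2] using h2)⟩)
    (fun v w ⟨c, hc, hcv⟩ => ⟨c, hc, funext fun j => by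
      by_cases hj : (j : ℕ) < n + 1
      · have h2 := congrFun hcv ⟨(j : ℕ), hj⟩
        simpa [extVec, hj] using h2
      · simp [extVec, hj]⟩)

/-- Two maps are homotopic. -/
def FnHomotopic {X Y : Type*} [TopologicalSpace X] [TopologicalSpace Y]
    (f g : X → Y) : Prop :=
  ∃ H : X × unitInterval → Y, Continuous H ∧ (∀ x, H (x, 0) = f x) ∧ ∀ x, H (x, 1) = g x

/-!
For `n < r` the axial map lifts to a map `Sⁿ × Sⁿ → Sʳ` that is odd in each variable. Its `r + 1`
coordinates `f` give motion planners: where `f (x, y) ≠ 0`, the sign of `f (x, y)` selects one of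
the two directions of rotation from the line of `x` to the line of `y`, compatibly with `x ↦ -x`
and `y ↦ -y`. On the diagonal a positive coordinate is needed instead; as `n < r`, the map can be
perturbed there to avoid a ray, and then in a suitable basis every `(x, x)` has one.

For `n = r` the axial map is a multiplication with homotopy unit on the path-connected space `Pⁿ`,
so homotopically one can divide: `y ≃ x · D (x, y)`. A categorical cover of `Pⁿ` pulls back along
`D` to a cover of `Pⁿ × Pⁿ` by sets on which `x ≃ y`, whence `TC(Pⁿ) ≤ cat(Pⁿ) ≤ n + 1`.
-/

open scoped unitInterval

section Patching

theorem setOf_pos_add_subset {B : Type*} [TopologicalSpace B] {U : Set B} {l μ : B → ℝ}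
    (hl_nonneg : ∀ b, 0 ≤ l b) (hμU : tsupport μ ⊆ U) :
    {b | 0 < l b + μ b} ⊆
      {b | 0 < l b} ∩ (tsupport μ)ᶜ ∪ {b | 0 < l b} ∩ U ∪ {b | l b < μ b} ∩ U := by
  rintro b (hb : 0 < l b + μ b)
  have := hl_nonneg b
  by_cases hbμ : b ∈ tsupport μ
  · by_cases hlt : l b < μ b
    · exact .inr ⟨hlt, hμU hbμ⟩
    · exact .inl (.inr ⟨show 0 < l b by linarith, hμU hbμ⟩)
  · have := image_eq_zero_of_notMem_tsupport hbμ
    exact .inl (.inl ⟨show 0 < l b by linarith, hbμ⟩)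

variable {M B : Type*} [TopologicalSpace M] [TopologicalSpace B]

/-- `p` has a continuous section over `V`. The section is a total function, so that sections over
different sets can be patched by case distinction. -/
def HasSectionOn (p : M → B) (V : Set B) : Prop :=
  ∃ s : B → M, ContinuousOn s V ∧ ∀ b ∈ V, p (s b) = b

/-- `p` is shrinkable over `U` in the sense of Dold: over `U` there is a section `s` of `p` together
with a fibrewise deformation `H` from the identity to `s ∘ p`. -/
def ShrinkableOn (p : M → B) (U : Set B) : Prop :=
  ∃ (s : B → M) (H : I × M → M), ContinuousOn s U ∧ ContinuousOn H (univ ×ˢ (p ⁻¹' U)) ∧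
    (∀ b ∈ U, p (s b) = b) ∧
    ∀ m, p m ∈ U → (∀ t, p (H (t, m)) = p m) ∧ H (0, m) = m ∧ H (1, m) = s (p m)

variable {p : M → B}

-- Where both are defined, the old section is pushed along the deformation for time `μ / l`: it has
-- arrived at the new section once `μ ≥ l`, and it has not moved outside the support of `μ`.
theorem HasSectionOn.add_of_shrinkableOn {U : Set B} {l μ : B → ℝ}
    (h : HasSectionOn p {b | 0 < l b}) (hU : ShrinkableOn p U) (hU_open : IsOpen U)
    (hl : Continuous l) (hl_nonneg : ∀ b, 0 ≤ l b) (hμ : Continuous μ) (hμU : tsupport μ ⊆ U) :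
    HasSectionOn p {b | 0 < l b + μ b} := by
  classical
  obtain ⟨s, hs, hps⟩ := h
  obtain ⟨sU, H, hsU, hH, hpsU, hHU⟩ := hU
  let τ (b : B) : I := projIcc 0 1 zero_le_one (μ b / l b)
  let s' (b : B) : M := if b ∈ U then if l b < μ b then sU b else H (τ b, s b) else s b
  have eq_old : EqOn s' s ({b | 0 < l b} ∩ (tsupport μ)ᶜ) := by
    rintro b ⟨hb : 0 < l b, hbμ⟩
    have hμ_zero : μ b = 0 := image_eq_zero_of_notMem_tsupport hbμ
    have hH_zero : b ∈ U → H (0, s b) = s b := fun hbU ↦ (hHU (s b) (by rwa [hps b hb])).2.1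
    by_cases hbU : b ∈ U <;> simp [s', τ, hbU, hμ_zero, hb.not_gt, hH_zero]
  have eq_mid : EqOn s' (fun b ↦ H (τ b, s b)) ({b | 0 < l b} ∩ U) := by
    rintro b ⟨hb : 0 < l b, hbU⟩
    by_cases hlt : l b < μ b
    · have hτ : τ b = 1 := projIcc_of_right_le _ ((one_le_div hb).2 hlt.le)
      have hH_one : H (1, s b) = sU (p (s b)) := (hHU (s b) (by rwa [hps b hb])).2.2
      simp [s', hbU, hlt, hτ, hH_one, hps b hb]
    · simp [s', hbU, hlt]
  have eq_new : EqOn s' sU ({b | l b < μ b} ∩ U) := by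
    rintro b ⟨hb : l b < μ b, hbU⟩
    simp [s', hbU, hb]
  have cont_mid : ContinuousOn (fun b ↦ H (τ b, s b)) ({b | 0 < l b} ∩ U) := by
    have hτ : ContinuousOn τ ({b | 0 < l b} ∩ U) := continuous_projIcc.comp_continuousOn
      (hμ.continuousOn.div hl.continuousOn fun b hb ↦ hb.1.ne')
    exact hH.comp (hτ.prodMk (hs.mono inter_subset_left))
      fun b hb ↦ ⟨mem_univ _, by simpa [hps b hb.1] using hb.2⟩
  have hl_open : IsOpen {b | 0 < l b} := isOpen_lt continuous_const hl
  have hold_open := hl_open.inter (isClosed_tsupport μ).isOpen_compl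
  have hmid_open := hl_open.inter hU_open
  have hnew_open := (isOpen_lt hl hμ).inter hU_open
  have hcover := setOf_pos_add_subset hl_nonneg hμU
  refine ⟨s', .mono ?_ hcover, fun b hb ↦ ?_⟩
  · exact (((hs.mono inter_subset_left).congr eq_old).union_of_isOpen (cont_mid.congr eq_mid)
      hold_open hmid_open).union_of_isOpen ((hsU.mono inter_subset_right).congr eq_new)
      (hold_open.union hmid_open) hnew_open
  · rcases hcover hb with (hb | hb) | hb
    · rw [eq_old hb, hps b hb.1]
    · rw [eq_mid hb, (hHU _ (by rw [hps b hb.1]; exact hb.2)).1, hps b hb.1]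
    · rw [eq_new hb, hpsU b hb.2]

theorem exists_section_of_shrinkableOn [Nonempty M] {ι : Type*} [Finite ι] {U : ι → Set B}
    (hU : ∀ i, ShrinkableOn p (U i)) (hU_open : ∀ i, IsOpen (U i)) {μ : ι → B → ℝ}
    (hμ : ∀ i, Continuous (μ i)) (hμ_nonneg : ∀ i b, 0 ≤ μ i b) (hμU : ∀ i, tsupport (μ i) ⊆ U i)
    (hμ_pos : ∀ b, ∃ i, 0 < μ i b) : ∃ s : C(B, M), ∀ b, p (s b) = b := by
  classical
  have := Fintype.ofFinite ι
  have key (J : Finset ι) : HasSectionOn p {b | 0 < ∑ i ∈ J, μ i b} := by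
    induction J using Finset.induction_on with
    | empty => exact ⟨fun _ ↦ Classical.arbitrary M, continuousOn_const, by simp⟩
    | insert i J hi ih =>
      simpa only [Finset.sum_insert hi, add_comm] using ih.add_of_shrinkableOn (hU i) (hU_open i)
        (continuous_finsetSum _ fun i _ ↦ hμ i)
        (fun b ↦ Finset.sum_nonneg fun i _ ↦ hμ_nonneg i b) (hμ i) (hμU i)
  have hpos (b : B) : 0 < ∑ i, μ i b :=
    Finset.sum_pos' (fun i _ ↦ hμ_nonneg i b) <| (hμ_pos b).imp fun i hi ↦ ⟨Finset.mem_univ i, hi⟩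
  obtain ⟨s, hs, hps⟩ := key Finset.univ
  exact ⟨⟨s, by simpa only [hpos, ofPred_true, continuousOn_univ] using hs⟩, fun b ↦ hps b (hpos b)⟩

end Patching

section Division

variable {B X : Type*} [TopologicalSpace B] [TopologicalSpace X]

/-- Solutions up to homotopy of the equations `a (b, u) = y`: tuples `((b, y), (u, γ))` with `γ` a
path from `a (b, u)` to `y`. -/
abbrev HomotopySolution (a : C(B × X, X)) : Type _ :=
  {m : (B × X) × (X × C(I, X)) // m.2.2 0 = a (m.1.1, m.2.1) ∧ m.2.2 1 = m.1.2}

namespace HomotopySolution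

variable {a : C(B × X, X)} (K : a.Homotopy .snd)

/-- Parametrised by `[0, 2]`, the path from `u` through `a (b, u)` to `y` which first runs back
along the homotopy `K` and then along `γ`. -/
noncomputable def joined (m : HomotopySolution a) (t : ℝ) : X :=
  if t ≤ 1 then IccExtend zero_le_one (fun s ↦ K (s, (m.1.1.1, m.1.2.1))) (1 - t)
  else IccExtend zero_le_one m.1.2.2 (t - 1)

/-- The path of the solution `joined K m (max θ 0)` in a deformation with parameter `θ ∈ [-1, 2]`.
For `θ ≥ 0` it follows `K` and then the rest of `joined K m`; during `θ ∈ [-1, 0]` the initial path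
`γ` is preceded by longer and longer portions of `K` followed by its inverse. -/
noncomputable def slidPath (θ : ℝ) (m : HomotopySolution a) (t : ℝ) : X :=
  if t * (3 + min θ 0 - |θ|) ≤ 1 + min θ 0 then
    IccExtend zero_le_one (fun s ↦ K (s, (m.1.1.1, joined K m (max θ 0)))) (t * (3 + min θ 0 - |θ|))
  else joined K m (|θ| + t * (3 + min θ 0 - |θ|) - (1 + min θ 0))

theorem continuous_joined : Continuous fun q : HomotopySolution a × ℝ ↦ joined K q.1 q.2 := by
  refine Continuous.if_le (Continuous.IccExtend ?_ (by fun_prop))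
    (Continuous.IccExtend ?_ (by fun_prop)) continuous_snd continuous_const ?_
  · fun_prop
  · fun_prop
  · rintro ⟨m, t⟩ rfl
    simp [m.2.1]

theorem joined_of_nonpos (m : HomotopySolution a) {t : ℝ} (ht : t ≤ 0) :
    joined K m t = m.1.2.1 := by
  rw [joined, if_pos (by linarith), IccExtend_of_right_le _ _ (by linarith)]
  exact K.apply_one _

theorem joined_two (m : HomotopySolution a) : joined K m 2 = m.1.1.2 := by
  rw [joined, if_neg (by norm_num), IccExtend_of_right_le _ _ (by norm_num)]
  exact m.2.2

theorem continuous_slidPath :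
    Continuous fun q : (Icc (-1 : ℝ) 2 × HomotopySolution a) × I ↦ slidPath K q.1.1 q.1.2 q.2 := by
  have hjoined (f : (Icc (-1 : ℝ) 2 × HomotopySolution a) × I → ℝ) (hf : Continuous f) :
      Continuous fun q : (Icc (-1 : ℝ) 2 × HomotopySolution a) × I ↦ joined K q.1.2 (f q) :=
    (continuous_joined K).comp (continuous_fst.snd.prodMk hf)
  refine Continuous.if_le (Continuous.IccExtend ?_ (by fun_prop)) (hjoined _ (by fun_prop))
    (by fun_prop) (by fun_prop) ?_
  · have := hjoined (fun q ↦ max q.1.1 0) (by fun_prop)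
    exact K.continuous.comp
      (continuous_snd.prodMk (.prodMk (by fun_prop) (this.comp continuous_fst)))
  · rintro ⟨⟨⟨θ, hθ⟩, m⟩, t⟩ hs
    simp only at hs ⊢
    rw [hs, add_sub_cancel_right]
    rcases le_total 0 θ with h | h
    · rw [min_eq_right h, max_eq_left h, abs_of_nonneg h, IccExtend_of_right_le _ _ (by norm_num)]
      exact K.apply_one _
    · rw [min_eq_left h, max_eq_right h, abs_of_nonpos h, joined_of_nonpos K m le_rfl, joined,
        if_pos (by linarith [hθ.1]), sub_neg_eq_add]

theorem slidPath_zero {θ : ℝ} (hθ : -1 ≤ θ) (m : HomotopySolution a) :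
    slidPath K θ m 0 = a (m.1.1.1, joined K m (max θ 0)) := by
  have : 0 ≤ 1 + min θ 0 := by linarith [le_min hθ (by norm_num : (-1 : ℝ) ≤ 0)]
  rw [slidPath, zero_mul, if_pos this, IccExtend_left]
  exact K.apply_zero _

theorem slidPath_neg_one (m : HomotopySolution a) (t : I) : slidPath K (-1) m t = m.1.2.2 t := by
  rw [slidPath, max_eq_right (by norm_num), min_eq_left (by norm_num), abs_neg, abs_one,
    joined_of_nonpos K m le_rfl, (by norm_num : (3 + -1 - 1 : ℝ) = 1), mul_one, add_neg_cancel,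
    sub_zero]
  split_ifs with ht
  · have : t = 0 := le_antisymm ht t.2.1
    subst this
    simp [m.2.1]
  · rw [joined, if_neg (by push Not at ht; linarith), add_sub_cancel_left, IccExtend_val]

theorem slidPath_two (m : HomotopySolution a) (t : I) : slidPath K 2 m t = K (t, m.1.1) := by
  rw [slidPath, max_eq_left (by norm_num), min_eq_right (by norm_num), abs_of_pos (by norm_num),
    joined_two, (by norm_num : (3 + 0 - 2 : ℝ) = 1), mul_one, add_zero, if_pos t.2.2, IccExtend_val]

theorem slidPath_one {θ : ℝ} (hθ : θ ∈ Icc (-1) 2) (m : HomotopySolution a) :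
    slidPath K θ m 1 = m.1.1.2 := by
  rcases hθ.2.eq_or_lt with rfl | hlt
  · exact (slidPath_two K m 1).trans (K.apply_one _)
  · have : |θ| < 2 := abs_lt.2 ⟨by linarith [hθ.1], hlt⟩
    rw [slidPath, if_neg (by linarith)]
    convert joined_two K m using 2
    ring

/-- The deformation of the solution space which at `θ = -1` is the identity, and at `θ = 2` replaces
`(u, γ)` by `y` with the path given by `K`. -/
noncomputable def slide : C(Icc (-1 : ℝ) 2 × HomotopySolution a, HomotopySolution a) where
  toFun q := ⟨(q.2.1.1, (joined K q.2 (max q.1 0),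
      ContinuousMap.curry ⟨_, continuous_slidPath K⟩ q)),
    slidPath_zero K q.1.2.1 q.2, slidPath_one K q.1.2 q.2⟩
  continuous_toFun :=
    have hjoined : Continuous fun q : Icc (-1 : ℝ) 2 × HomotopySolution a ↦
        joined K q.2 (max q.1 0) :=
      (continuous_joined K).comp (continuous_snd.prodMk (by fun_prop))
    .subtype_mk (.prodMk (by fun_prop) (hjoined.prodMk (ContinuousMap.continuous _))) _

/-- The solution `u = y` of `a (b, u) = y` up to homotopy that a homotopy `K` from `a` to the second
projection provides. -/
def ofHomotopy : C(B × X, HomotopySolution a) where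
  toFun b := ⟨(b, (b.2, ContinuousMap.curry ⟨fun q : (B × X) × I ↦ K (q.2, q.1), by fun_prop⟩ b)),
    K.apply_zero b, K.apply_one b⟩
  continuous_toFun := .subtype_mk (.prodMk continuous_id
    (.prodMk continuous_snd (ContinuousMap.continuous _))) _

theorem slide_neg_one (m : HomotopySolution a) : slide K (⟨-1, by norm_num⟩, m) = m := by
  refine Subtype.ext (Prod.ext rfl (Prod.ext ?_ ?_))
  · exact joined_of_nonpos K m (by norm_num)
  · ext t
    exact slidPath_neg_one K m t

theorem slide_two (m : HomotopySolution a) :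
    slide K (⟨2, by norm_num⟩, m) = ofHomotopy K m.1.1 := by
  refine Subtype.ext (Prod.ext rfl (Prod.ext ?_ ?_))
  · exact (congrArg (joined K m) (max_eq_left zero_le_two)).trans (joined_two K m)
  · ext t
    exact slidPath_two K m t

instance [Nonempty B] [Nonempty X] : Nonempty (HomotopySolution a) :=
  Nonempty.elim ‹_› fun b : B ↦ Nonempty.elim ‹_› fun u : X ↦
    ⟨⟨((b, a (b, u)), (u, .const I (a (b, u)))), rfl, rfl⟩⟩

theorem shrinkableOn_of_homotopic [Nonempty B] [Nonempty X] {U : Set B}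
    (h : (a.comp (.prodMap (.restrict U (.id B)) (.id X))).Homotopic .snd) :
    ShrinkableOn (fun m : HomotopySolution a ↦ m.1.1) (Prod.fst ⁻¹' U) := by
  classical
  obtain ⟨K⟩ := h
  let aU : C(U × X, X) := a.comp (.prodMap (.restrict U (.id B)) (.id X))
  let incl (m : HomotopySolution aU) : HomotopySolution a := ⟨((m.1.1.1, m.1.1.2), m.1.2), m.2⟩
  have hincl : Continuous incl := by fun_prop
  let restr (m : HomotopySolution a) (hm : m.1.1.1 ∈ U) : HomotopySolution aU :=
    ⟨((⟨m.1.1.1, hm⟩, m.1.1.2), m.1.2), m.2⟩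
  let θ (t : I) : Icc (-1 : ℝ) 2 := ⟨3 * t - 1, by linarith [t.2.1], by linarith [t.2.2]⟩
  have hθ_zero : θ 0 = ⟨-1, by norm_num⟩ := by simp [θ]
  have hθ_one : θ 1 = ⟨2, by norm_num⟩ := by norm_num [θ]
  let s (b : B × X) : HomotopySolution a :=
    if hb : b.1 ∈ U then incl (ofHomotopy K (⟨b.1, hb⟩, b.2)) else Classical.arbitrary _
  let H (q : I × HomotopySolution a) : HomotopySolution a :=
    if hq : q.2.1.1.1 ∈ U then incl (slide K (θ q.1, restr q.2 hq)) else q.2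
  have s_eq {b} (hb : b.1 ∈ U) : s b = incl (ofHomotopy K (⟨b.1, hb⟩, b.2)) := dif_pos hb
  have H_eq {t m} (hm : m.1.1.1 ∈ U) : H (t, m) = incl (slide K (θ t, restr m hm)) := dif_pos hm
  refine ⟨s, H, ?_, ?_, fun b hb ↦ by rw [s_eq hb]; rfl, fun m hm ↦ ⟨fun t ↦ ?_, ?_, ?_⟩⟩
  · rw [continuousOn_iff_continuous_domRestrict]
    exact (hincl.comp ((ofHomotopy K).continuous.comp (f := fun b : Prod.fst ⁻¹' U ↦
      ((⟨b.1.1, b.2⟩ : U), b.1.2)) (by fun_prop))).congr fun b ↦ (s_eq b.2).symm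
  · rw [continuousOn_iff_continuous_domRestrict]
    exact (hincl.comp ((slide K).continuous.comp (f := fun q : ↥(univ ×ˢ _) ↦
      (θ q.1.1, restr q.1.2 q.2.2)) (by fun_prop))).congr fun q ↦ (H_eq q.2.2).symm
  · rw [H_eq hm]
    rfl
  · rw [H_eq hm, hθ_zero, slide_neg_one]
  · rw [H_eq hm, hθ_one, slide_two, s_eq hm]

end HomotopySolution

theorem exists_homotopic_snd [Nonempty B] [Nonempty X] {a : C(B × X, X)} {ι : Type*} [Finite ι]
    {U : ι → Set B} (hU : ∀ i, IsOpen (U i))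
    (h : ∀ i, (a.comp (.prodMap (.restrict (U i) (.id B)) (.id X))).Homotopic .snd)
    (μ : PartitionOfUnity ι B) (hμ : μ.IsSubordinate U) :
    ∃ D : C(B × X, X), (a.comp (.prodMk .fst D)).Homotopic .snd := by
  obtain ⟨s, hs⟩ := exists_section_of_shrinkableOn
    (fun i ↦ HomotopySolution.shrinkableOn_of_homotopic (h i))
    (fun i ↦ (hU i).preimage continuous_fst) (μ := fun i b ↦ μ i b.1) (fun i ↦ by fun_prop)
    (fun i b ↦ μ.nonneg i b.1)
    (fun i ↦ (tsupport_comp_subset_preimage (μ i) continuous_fst).trans (preimage_mono (hμ i)))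
    (fun b ↦ μ.exists_pos (mem_univ b.1))
  refine ⟨⟨fun b ↦ (s b).1.2.1, by fun_prop⟩, ⟨⟨⟨fun q ↦ (s q.2).1.2.2 q.1, by fun_prop⟩, ?_, ?_⟩⟩⟩
  · intro b
    simpa [hs b] using (s b).2.1
  · intro b
    simpa [hs b] using (s b).2.2

end Division

section TopologicalComplexity

variable {X : Type*} [TopologicalSpace X]

theorem FnHomotopic.homotopic {Y : Type*} [TopologicalSpace Y] {f g : C(X, Y)}
    (h : FnHomotopic f g) : f.Homotopic g := by
  obtain ⟨H, hH, h0, h1⟩ := h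
  exact ⟨⟨⟨fun q ↦ H (q.2, q.1), by fun_prop⟩, h0, h1⟩⟩

theorem pathSecOn_of_homotopic_s11 {W : Set (X × X)}
    (h : ContinuousMap.Homotopic (.restrict W .fst) (.restrict W .snd : C(W, X))) :
    PathSecOn X W := by
  obtain ⟨H⟩ := h
  exact ⟨.curry ⟨fun q : W × I ↦ H (q.2, q.1), by fun_prop⟩,
    fun p ↦ ⟨H.apply_zero p, H.apply_one p⟩⟩

theorem topComplexity_le_of_isOpen_cover {k : ℕ} {U : Fin k → Set (X × X)} (hU : ∀ i, IsOpen (U i))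
    (hcover : ∀ p, ∃ i, p ∈ U i) (hsec : ∀ i, PathSecOn X (U i)) : TopComplexity X ≤ k :=
  sInf_le ⟨k, rfl, U, fun i ↦ ⟨U i, hU i, (inter_univ _).symm⟩,
    fun p _ ↦ mem_iUnion.2 (hcover p), hsec⟩

-- If `D` solves `a (x, D (x, y)) ≃ y` and `D (x, y)` is deformed to the unit,
-- then `x ≃ a (x, x₀) ≃ a (x, D (x, y)) ≃ y`.
theorem topComplexity_le_lsCat [PathConnectedSpace X] [NormalSpace X] [ParacompactSpace X]
    (a : C(X × X, X)) (x₀ : X) (hleft : (a.comp (.prodMk (.const X x₀) (.id X))).Homotopic (.id X))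
    (hright : (a.comp (.prodMk (.id X) (.const X x₀))).Homotopic (.id X)) :
    TopComplexity X ≤ LSCat X := by
  refine le_sInf ?_
  rintro _ ⟨k, rfl, U, hU_open, hcover, hnull⟩
  have hU_open (i) : IsOpen (U i) := by
    obtain ⟨V, hV, hUV⟩ := hU_open i
    rwa [hUV, inter_univ]
  have hnull (i) : (ContinuousMap.restrict (U i) (.id X)).Homotopic (.const (U i) x₀) := by
    obtain ⟨x₁, h⟩ := hnull i
    have hx : (ContinuousMap.const X x₁).Homotopic (.const X x₀) :=
      ContinuousMap.homotopic_const_iff.2 (PathConnectedSpace.joined x₁ x₀)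
    exact h.trans (hx.comp (.refl (.restrict (U i) (.id X))))
  obtain ⟨μ, hμ⟩ := PartitionOfUnity.exists_isSubordinate isClosed_univ U hU_open hcover
  have hsnd (i) : (a.comp (.prodMap (.restrict (U i) (.id X)) (.id X))).Homotopic .snd :=
    ((ContinuousMap.Homotopic.refl a).comp ((hnull i).prodMap (.refl (.id X)))).trans
      (hleft.comp (.refl .snd))
  obtain ⟨D, hD⟩ := exists_homotopic_snd hU_open hsnd μ hμ
  refine topComplexity_le_of_isOpen_cover (fun i ↦ (hU_open i).preimage D.continuous)
    (fun p ↦ by simpa using hcover (mem_univ (D p))) fun i ↦ pathSecOn_of_homotopic_s11 ?_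
  let W := D ⁻¹' U i
  have hfst : (a.comp (.prodMk (.restrict W .fst) (.const W x₀))).Homotopic (.restrict W .fst) :=
    hright.comp (.refl (.restrict W .fst))
  have hunit : (a.comp (.prodMk (.restrict W .fst) (.restrict W D))).Homotopic
      (a.comp (.prodMk (.restrict W .fst) (.const W x₀))) :=
    (ContinuousMap.Homotopic.refl a).comp (.prodMk (.refl (.restrict W .fst))
      ((hnull i).comp (.refl (D.restrictPreimage (U i)))))
  have hdiv : (a.comp (.prodMk (.restrict W .fst) (.restrict W D))).Homotopic (.restrict W .snd) :=
    hD.comp (.refl (.restrict W (.id (X × X))))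
  exact hfst.symm.trans (hunit.symm.trans hdiv)

end TopologicalComplexity

section NormedSpace

variable {V : Type*} [NormedAddCommGroup V] [NormedSpace ℝ V]

theorem add_eq_zero_of_convexComb_eq_zero {x y : V} (hxy : ‖x‖ = ‖y‖) {t : I}
    (h : (1 - (t : ℝ)) • x + (t : ℝ) • y = 0) : x + y = 0 := by
  have hnorm : (1 - (t : ℝ)) * ‖x‖ = t * ‖x‖ := by
    simpa [norm_smul, hxy, abs_of_nonneg t.2.1, abs_of_nonneg (sub_nonneg.2 t.2.2)] using
      congrArg norm (eq_neg_of_add_eq_zero_left h)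
  rcases eq_or_ne ‖x‖ 0 with hx | hx
  · rw [norm_eq_zero.1 hx, norm_eq_zero.1 (hxy.symm.trans hx), add_zero]
  · have ht : (t : ℝ) = 1 / 2 := by linarith [mul_right_cancel₀ hx hnorm]
    calc x + y = (2 : ℝ) • ((1 - (t : ℝ)) • x + (t : ℝ) • y) := by rw [ht]; module
      _ = 0 := by rw [h, smul_zero]

theorem isOpen_setOf_forall_not_sameRay {T : Type*} [TopologicalSpace T] [CompactSpace T]
    (p : C(T, V)) : IsOpen {w | ∀ x, ¬SameRay ℝ w (p x)} := by
  have hgraph : IsClosed {q : T × V | SameRay ℝ q.2 (p q.1)} := by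
    simp only [sameRay_iff_norm_smul_eq]
    exact isClosed_eq (by fun_prop) (by fun_prop)
  have : {w | ∀ x, ¬SameRay ℝ w (p x)}ᶜ = Prod.snd '' {q : T × V | SameRay ℝ q.2 (p q.1)} := by
    ext w
    simp
  exact isClosed_compl_iff.1 (this ▸ isClosedMap_snd_of_compactSpace _ hgraph)

theorem exists_basis_forall_mem [FiniteDimensional ℝ V] {B : Set V} (hB : IsOpen B)
    (hB_ne : B.Nonempty) : ∃ b : Module.Basis (Fin (Module.finrank ℝ V)) ℝ V, ∀ i, b i ∈ B := by
  have hspan : ⊤ ≤ Submodule.span ℝ B := (Submodule.eq_top_of_nonempty_interior' _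
    (hB_ne.mono (hB.subset_interior_iff.2 Submodule.subset_span))).ge
  let b := Module.Basis.ofSpan hspan
  have := Module.Finite.finite_basis b
  have e := Module.finBasis ℝ V |>.indexEquiv b
  exact ⟨b.reindex e.symm, fun i ↦ Module.Basis.ofSpan_subset hspan ⟨e i, by simp [b]⟩⟩

theorem exists_sameRay_of_repr_nonneg {ι : Type*} [Finite ι] {B : Set V} (hB : Convex ℝ B)
    {b : Module.Basis ι ℝ V} (hb : ∀ i, b i ∈ B) {v : V} (hv : v ≠ 0)
    (hv_nonneg : ∀ i, 0 ≤ b.repr v i) : ∃ w ∈ B, SameRay ℝ w v := by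
  have := Fintype.ofFinite ι
  have hsum : 0 < ∑ i, b.repr v i := by
    refine (Finset.sum_nonneg fun i _ ↦ hv_nonneg i).lt_of_ne' fun h ↦ hv ?_
    refine b.ext_elem fun i ↦ ?_
    simpa using (Finset.sum_eq_zero_iff_of_nonneg fun i _ ↦ hv_nonneg i).1 h i (Finset.mem_univ i)
  refine ⟨Finset.univ.centerMass (b.repr v) b, hB.centerMass_mem (fun i _ ↦ hv_nonneg i) hsum
    fun i _ ↦ hb i, ?_⟩
  rw [Finset.centerMass, b.sum_repr]
  exact SameRay.sameRay_pos_smul_left v (inv_pos.2 hsum)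

end NormedSpace

namespace RealProj

open Metric Submodule

variable {n r : ℕ}

/-- The Euclidean space whose lines are the points of `RealProj n`. -/
abbrev Ambient (n : ℕ) : Type := EuclideanSpace ℝ (Fin (n + 1))

/-- The unit sphere of `Ambient n`, the double cover of `RealProj n`. -/
abbrev Sphere (n : ℕ) : Type := sphere (0 : Ambient n) 1

/-- The point of `RealProj n` represented by a nonzero vector. -/
def mk (v : {v : Ambient n // v ≠ 0}) : RealProj n :=
  Quot.mk _ ⟨v.1.ofLp, (WithLp.ofLp_eq_zero 2).not.2 v.2⟩

/-- A point of `RealProj n` as a one-dimensional subspace. -/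
def line (p : RealProj n) : Submodule ℝ (Ambient n) :=
  Quot.lift (fun v ↦ ℝ ∙ WithLp.toLp 2 v.1) (fun _ _ ⟨c, hc, hcv⟩ ↦
    Submodule.span_singleton_eq_span_singleton.2 ⟨.mk0 c hc, congrArg (WithLp.toLp 2) hcv⟩) p

theorem continuous_mk : Continuous (mk (n := n)) :=
  continuous_quot_mk.comp (.subtype_mk (by fun_prop) _)

theorem surjective_mk : Function.Surjective (mk (n := n)) := by
  rintro ⟨v, hv⟩
  exact ⟨⟨.toLp 2 v, (WithLp.toLp_eq_zero 2).not.2 hv⟩, rfl⟩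

@[simp]
theorem line_mk (v : {v : Ambient n // v ≠ 0}) : line (mk v) = ℝ ∙ v.1 := rfl

theorem mk_eq_mk_iff {v w : {v : Ambient n // v ≠ 0}} :
    mk v = mk w ↔ ∃ c : ℝˣ, c • v.1 = w.1 := by
  refine ⟨fun h ↦ span_singleton_eq_span_singleton.1 (congrArg line h), fun ⟨c, hc⟩ ↦ ?_⟩
  exact Quot.sound ⟨c, c.ne_zero, congrArg WithLp.ofLp hc⟩

theorem injective_line : Function.Injective (line (n := n)) := by
  intro p q h
  obtain ⟨v, rfl⟩ := surjective_mk p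
  obtain ⟨w, rfl⟩ := surjective_mk q
  exact mk_eq_mk_iff.2 (span_singleton_eq_span_singleton.1 h)

theorem mk_eq_of_mem_line {v : {v : Ambient n // v ≠ 0}} {p : RealProj n} (h : v.1 ∈ line p) :
    mk v = p := by
  obtain ⟨w, rfl⟩ := surjective_mk p
  obtain ⟨c, hc⟩ := mem_span_singleton.1 h
  have hc_ne : c ≠ 0 := fun h0 ↦ v.2 (by rw [← hc, h0, zero_smul])
  exact (mk_eq_mk_iff.2 ⟨.mk0 c hc_ne, hc⟩).symm

theorem continuous_starProjection_line (w : Ambient n) :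
    Continuous fun p : RealProj n ↦ (line p).starProjection w := by
  have : Continuous fun v : {x : Fin (n + 1) → ℝ // x ≠ 0} ↦
      (inner ℝ (WithLp.toLp 2 v.1) w / ‖WithLp.toLp 2 v.1‖ ^ 2) • WithLp.toLp 2 v.1 := by
    have hne (v : {x : Fin (n + 1) → ℝ // x ≠ 0}) : ‖WithLp.toLp 2 v.1‖ ^ 2 ≠ 0 := by
      simpa using v.2
    have hdiv : Continuous fun v : {x : Fin (n + 1) → ℝ // x ≠ 0} ↦
        inner ℝ (WithLp.toLp 2 v.1) w / ‖WithLp.toLp 2 v.1‖ ^ 2 :=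
      Continuous.div₀ (by fun_prop) (by fun_prop) hne
    exact hdiv.smul (by fun_prop)
  exact continuous_coinduced_dom.2 <| this.congr fun v ↦ (starProjection_singleton ℝ w).symm

instance : T2Space (RealProj n) :=
  .of_injective_continuous (f := fun p w ↦ (line p).starProjection w)
    (fun _ _ h ↦ injective_line (starProjection_inj.1 (DFunLike.coe_injective h)))
    (continuous_pi continuous_starProjection_line)

/-- The double cover of projective space by the sphere. -/
def ofSphere (x : Sphere n) : RealProj n := mk ⟨x, ne_zero_of_mem_unit_sphere x⟩

theorem continuous_ofSphere : Continuous (ofSphere (n := n)) :=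
  continuous_mk.comp (.subtype_mk (by fun_prop) _)

/-- The unit vector on the ray through a nonzero vector. -/
noncomputable def normalize (v : {v : Ambient n // v ≠ 0}) : Sphere n :=
  ⟨‖v.1‖⁻¹ • v.1, by simp [norm_smul, v.2]⟩

theorem continuous_normalize : Continuous (normalize (n := n)) :=
  .subtype_mk (.smul (.inv₀ (by fun_prop) fun v ↦ norm_ne_zero_iff.2 v.2) continuous_subtype_val) _

theorem ofSphere_normalize (v : {v : Ambient n // v ≠ 0}) : ofSphere (normalize v) = mk v :=
  mk_eq_mk_iff.2 ⟨.mk0 ‖v.1‖ (norm_ne_zero_iff.2 v.2), smul_inv_smul₀ (norm_ne_zero_iff.2 v.2) v.1⟩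

theorem surjective_ofSphere : Function.Surjective (ofSphere (n := n)) := by
  intro p
  obtain ⟨v, rfl⟩ := surjective_mk p
  exact ⟨normalize v, ofSphere_normalize v⟩

theorem mk_eq_ofSphere {v : {v : Ambient n // v ≠ 0}} {x : Sphere n} {c : ℝ} (h : c • x.1 = v.1) :
    mk v = ofSphere x :=
  mk_eq_of_mem_line (mem_span_singleton.2 ⟨c, h⟩)

theorem ofSphere_eq_iff {x y : Sphere n} : ofSphere x = ofSphere y ↔ x = y ∨ x = -y := by
  refine mk_eq_mk_iff.trans ⟨fun ⟨c, hc⟩ ↦ ?_, ?_⟩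
  · have hc_abs : |(c : ℝ)| = 1 := by simpa [Units.smul_def, norm_smul] using congrArg norm hc
    rcases eq_or_eq_neg_of_abs_eq hc_abs with h | h
    · exact .inl (Subtype.ext (by simpa [Units.smul_def, h] using hc))
    · have hneg : -(x : Ambient n) = y := by simpa [Units.smul_def, h] using hc
      exact .inr (Subtype.ext (neg_eq_iff_eq_neg.1 hneg))
  · rintro (rfl | rfl)
    · exact ⟨1, one_smul _ _⟩
    · exact ⟨-1, by simp [Units.smul_def]⟩

@[simp]
theorem ofSphere_neg (x : Sphere n) : ofSphere (-x) = ofSphere x :=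
  ofSphere_eq_iff.2 (.inr rfl)

instance : CompactSpace (RealProj n) := surjective_ofSphere.compactSpace continuous_ofSphere

theorem isOpenQuotientMap_ofSphere : IsOpenQuotientMap (ofSphere (n := n)) where
  surjective := surjective_ofSphere
  continuous := continuous_ofSphere
  isOpenMap U hU := by
    have hquot : Topology.IsQuotientMap (ofSphere (n := n)) :=
      .of_surjective_continuous surjective_ofSphere continuous_ofSphere
    have : ofSphere ⁻¹' (ofSphere '' U) = U ∪ Neg.neg ⁻¹' U := by
      ext x
      simp only [mem_preimage, mem_image, ofSphere_eq_iff, mem_union]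
      constructor
      · rintro ⟨y, hy, rfl | rfl⟩
        · exact .inl hy
        · exact .inr (by simpa using hy)
      · rintro (h | h)
        · exact ⟨x, h, .inl rfl⟩
        · exact ⟨-x, h, .inr rfl⟩
    rw [← hquot.isOpen_preimage, this]
    exact hU.union (hU.preimage continuous_neg)

theorem isCoveringMap_ofSphere : IsCoveringMap (ofSphere (n := n)) := by
  refine isLocalHomeomorph_iff_isCoveringMap.1 <|
    isLocalHomeomorph_iff_isOpenEmbedding_restrict.2 fun x ↦ ?_
  let U : Set (Sphere n) := {y | 0 < inner ℝ x.1 y.1}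
  have hU : IsOpen U := isOpen_lt continuous_const (by fun_prop)
  refine ⟨U, hU.mem_nhds (by simp [U]), .of_continuous_injective_isOpenMap
    (continuous_ofSphere.comp continuous_subtype_val) ?_
    (isOpenQuotientMap_ofSphere.isOpenMap.domRestrict hU)⟩
  rintro ⟨y, hy : 0 < inner ℝ x.1 y.1⟩ ⟨z, hz : 0 < inner ℝ x.1 z.1⟩ hyz
  rcases ofSphere_eq_iff.1 hyz with rfl | rfl
  · rfl
  · rw [coe_neg_sphere, inner_neg_right] at hy
    linarith

section Connected

variable [NeZero n]

instance : PathConnectedSpace (Sphere n) := by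
  refine isPathConnected_iff_pathConnectedSpace.1 (isPathConnected_sphere ?_ 0 zero_le_one)
  rw [← Module.finrank_eq_rank, finrank_euclideanSpace_fin]
  exact_mod_cast Nat.lt_add_of_pos_left (NeZero.pos n)

instance : PathConnectedSpace (RealProj n) :=
  surjective_ofSphere.pathConnectedSpace continuous_ofSphere

end Connected

/-- The `i`-th diagonal entry of the orthogonal projection onto a line. -/
noncomputable def diagEntry (i : Fin (n + 1)) (p : RealProj n) : ℝ :=
  (line p).starProjection (EuclideanSpace.single i 1) i

theorem continuous_diagEntry (i : Fin (n + 1)) : Continuous (diagEntry i) := by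
  have := continuous_starProjection_line (EuclideanSpace.single i (1 : ℝ))
  unfold diagEntry
  fun_prop

theorem diagEntry_mk (i : Fin (n + 1)) (v : {v : Ambient n // v ≠ 0}) :
    diagEntry i (mk v) = v.1 i ^ 2 / ‖v.1‖ ^ 2 := by
  simp [diagEntry, starProjection_singleton, EuclideanSpace.inner_single_right]
  ring

theorem exists_diagEntry_pos (p : RealProj n) : ∃ i, 0 < diagEntry i p := by
  obtain ⟨v, rfl⟩ := surjective_mk p
  obtain ⟨i, hi⟩ : ∃ i, v.1 i ≠ 0 := by
    by_contra! h
    exact v.2 (PiLp.ext h)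
  have := norm_ne_zero_iff.2 v.2
  exact ⟨i, by rw [diagEntry_mk]; positivity⟩

theorem homotopic_const_of_diagEntry_pos (i : Fin (n + 1)) :
    (ContinuousMap.restrict {p | 0 < diagEntry i p} (.id (RealProj n))).Homotopic
      (.const _ (mk ⟨EuclideanSpace.single i 1, by simp⟩)) := by
  let e : Ambient n := EuclideanSpace.single i 1
  let v (q : I × {p : RealProj n | 0 < diagEntry i p}) : Ambient n :=
    (1 - (q.1 : ℝ)) • (line q.2.1).starProjection e + (q.1 : ℝ) • e
  have hv : Continuous v := by
    have : Continuous fun q : I × {p : RealProj n | 0 < diagEntry i p} ↦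
        (line q.2.1).starProjection e :=
      (continuous_starProjection_line e).comp (continuous_subtype_val.comp continuous_snd)
    fun_prop
  have hv_ne (q) : v q ≠ 0 := by
    intro h
    have hcoord : (1 - (q.1 : ℝ)) * diagEntry i q.2.1 + q.1 = 0 := by
      simpa [v, e, diagEntry] using congrArg (fun u : Ambient n ↦ u i) h
    have hentry : 0 < diagEntry i q.2.1 := q.2.2
    rcases unitInterval.nonneg q.1 |>.eq_or_lt with ht | ht
    · simp [← ht, hentry.ne'] at hcoord
    · nlinarith [unitInterval.le_one q.1]
  refine ⟨⟨⟨fun q ↦ mk ⟨v q, hv_ne q⟩, continuous_mk.comp (hv.subtype_mk _)⟩,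
    fun p ↦ ?_, fun p ↦ ?_⟩⟩
  · exact mk_eq_of_mem_line (by simp [v])
  · simp [v, e]

theorem lsCat_le : LSCat (RealProj n) ≤ (n + 1 : ℕ) :=
  sInf_le ⟨n + 1, rfl, fun i ↦ {p | 0 < diagEntry i p},
    fun i ↦ ⟨_, isOpen_lt continuous_const (continuous_diagEntry i), (inter_univ _).symm⟩,
    fun p _ ↦ mem_iUnion.2 (exists_diagEntry_pos p),
    fun i ↦ ⟨_, homotopic_const_of_diagEntry_pos i⟩⟩

theorem extVec_ne_zero (hnr : n ≤ r) {v : Fin (n + 1) → ℝ} (hv : v ≠ 0) : extVec n r v ≠ 0 := by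
  obtain ⟨i, hi⟩ := Function.ne_iff.1 hv
  refine Function.ne_iff.2 ⟨i.castLE (by omega), ?_⟩
  simpa [extVec, i.is_le] using hi

theorem continuous_extVec : Continuous (extVec n r) := by
  refine continuous_pi fun j ↦ ?_
  by_cases hj : (j : ℕ) < n + 1
  · simpa [extVec, hj] using continuous_apply _
  · simpa [extVec, hj] using continuous_const

theorem extVec_neg (v : Fin (n + 1) → ℝ) : extVec n r (-v) = -extVec n r v := by
  ext j
  by_cases hj : (j : ℕ) < n + 1 <;> simp [extVec, hj]

theorem continuous_projIncl (hnr : n ≤ r) : Continuous (projIncl n r hnr) :=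
  continuous_coinduced_dom.2 <| continuous_quot_mk.comp <|
    .subtype_mk (continuous_extVec.comp continuous_subtype_val) _

theorem projIncl_self (n : ℕ) : projIncl n n le_rfl = id := by
  funext p
  induction p using Quot.ind
  exact congrArg (Quot.mk _) (Subtype.ext (funext fun j ↦ dif_pos j.2))

/-- `f` lifts to a map of spheres that commutes with the antipodal maps. -/
def HasOddLift (f : C(RealProj n, RealProj r)) : Prop :=
  ∃ g : C(Sphere n, Sphere r), Function.Odd g ∧ ∀ x, ofSphere (g x) = f (ofSphere x)

theorem hasOddLift_projIncl (hnr : n ≤ r) :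
    HasOddLift ⟨projIncl n r hnr, continuous_projIncl hnr⟩ := by
  let v (x : Sphere n) : {v : Ambient r // v ≠ 0} := ⟨.toLp 2 (extVec n r x.1.ofLp),
    (WithLp.toLp_eq_zero 2).not.2 <| extVec_ne_zero hnr <|
      (WithLp.ofLp_eq_zero 2).not.2 (ne_zero_of_mem_unit_sphere x)⟩
  have hv : Continuous v :=
    .subtype_mk ((PiLp.continuous_toLp 2 _).comp (continuous_extVec.comp (by fun_prop))) _
  refine ⟨⟨fun x ↦ normalize (v x), continuous_normalize.comp hv⟩, fun x ↦ ?_,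
    fun x ↦ ofSphere_normalize (v x)⟩
  ext1
  simp [normalize, v, extVec_neg]

theorem HasOddLift.of_homotopic {f f' : C(RealProj n, RealProj r)} (hf : HasOddLift f)
    (h : f.Homotopic f') : HasOddLift f' := by
  obtain ⟨g, hg_odd, hg⟩ := hf
  obtain ⟨H⟩ := h
  let H' : C(I × Sphere n, RealProj r) :=
    H.toContinuousMap.comp (.prodMap (.id I) ⟨ofSphere, continuous_ofSphere⟩)
  have hzero (x) : H' (0, x) = ofSphere (g x) := (H.apply_zero _).trans (hg x).symm
  let G : C(I × Sphere n, Sphere r) := isCoveringMap_ofSphere.liftHomotopy H' g hzero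
  have hG (q) : ofSphere (G q) = H' q :=
    congrFun (isCoveringMap_ofSphere.liftHomotopy_lifts H' g hzero) q
  have hG_zero (x) : G (0, x) = g x := isCoveringMap_ofSphere.liftHomotopy_zero H' g hzero x
  refine ⟨G.comp (.prodMk (.const _ 1) (.id _)), fun x ↦ ?_,
    fun x ↦ (hG (1, x)).trans (H.apply_one _)⟩
  have hodd : (fun t ↦ G (t, -x)) = fun t ↦ -G (t, x) :=
    isCoveringMap_ofSphere.eq_of_comp_eq (by fun_prop) (by fun_prop)
      (funext fun t ↦ by simp [hG, H']) 0 (by simp [hG_zero, hg_odd x])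
  exact congrFun hodd 1

theorem exists_contraction_compl_antipode (e : Sphere n) :
    ∃ Γ : C(I × {y : Sphere n // y ≠ -e}, Sphere n), (∀ y, Γ (0, y) = e) ∧ ∀ y, Γ (1, y) = y := by
  let v (q : I × {y : Sphere n // y ≠ -e}) : Ambient n :=
    (1 - (q.1 : ℝ)) • e.1 + (q.1 : ℝ) • q.2.1.1
  have hv_ne (q) : v q ≠ 0 := fun h ↦ q.2.2 <| Subtype.ext <|
    (neg_eq_of_add_eq_zero_right (add_eq_zero_of_convexComb_eq_zero (by simp) h)).symm
  refine ⟨⟨fun q ↦ normalize ⟨v q, hv_ne q⟩, continuous_normalize.comp (.subtype_mk ?_ _)⟩,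
    fun y ↦ ?_, fun y ↦ ?_⟩
  · fun_prop
  · ext1
    simp [v, normalize]
  · ext1
    simp [v, normalize]

-- `continuous_lift` gives continuity away from the antipode of `e`, oddness the rest.
theorem continuous_of_odd_slices {T : Type*} [TopologicalSpace T] {f : C(T × Sphere n, RealProj r)}
    {g : T → C(Sphere n, Sphere r)} (hg_odd : ∀ t, Function.Odd (g t))
    (hg : ∀ t y, ofSphere (g t y) = f (t, y)) (e : Sphere n) (he : Continuous fun t ↦ g t e) :
    Continuous fun q : T × Sphere n ↦ g q.1 q.2 := by
  obtain ⟨Γ, hΓ_zero, hΓ_one⟩ := exists_contraction_compl_antipode e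
  have key : ContinuousOn (fun q : T × Sphere n ↦ g q.1 q.2) {q | q.2 ≠ -e} := by
    let δ : C(I × {q : T × Sphere n | q.2 ≠ -e}, Sphere n) :=
      Γ.comp ⟨fun z ↦ (z.1, ⟨z.2.1.2, z.2.2⟩), by fun_prop⟩
    have hδ_zero (q) : δ (0, q) = e := hΓ_zero _
    have hδ_one (q) : δ (1, q) = q.1.2 := hΓ_one _
    have hlift : Continuous fun z : I × {q : T × Sphere n | q.2 ≠ -e} ↦ g z.2.1.1 (δ z) := by
      refine isCoveringMap_ofSphere.isLocalHomeomorph.continuous_lift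
        isCoveringMap_ofSphere.isSeparatedMap
        (f.comp (.prodMk ⟨fun z ↦ z.2.1.1, by fun_prop⟩ δ))
        (funext fun z ↦ hg z.2.1.1 (δ z)) ?_ fun q ↦ ?_
      · exact (he.comp (continuous_fst.comp continuous_subtype_val)).congr fun q ↦
          congrArg (g q.1.1) (hδ_zero q).symm
      · exact (g q.1.1).continuous.comp (δ.continuous.comp (.prodMk_left q))
    refine continuousOn_iff_continuous_domRestrict.2 <|
      (hlift.comp (.prodMk_right 1)).congr fun q ↦ congrArg (g q.1.1) (hδ_one q)
  have key_neg : ContinuousOn (fun q : T × Sphere n ↦ g q.1 q.2) {q | q.2 ≠ e} := by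
    have : ContinuousOn (fun q : T × Sphere n ↦ -g q.1 (-q.2)) {q | q.2 ≠ e} :=
      continuous_neg.comp_continuousOn <| key.comp (f := fun q : T × Sphere n ↦ (q.1, -q.2))
        (by fun_prop) fun q hq ↦ by simpa using hq
    exact this.congr fun q _ ↦ by simp [hg_odd q.1 q.2]
  refine continuous_iff_continuousAt.2 fun q ↦ ?_
  by_cases hq : q.2 = -e
  · have hq' : q.2 ≠ e := hq ▸ (ne_neg_of_mem_unit_sphere ℝ e).symm
    exact key_neg.continuousAt ((isOpen_ne_fun continuous_snd continuous_const).mem_nhds hq')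
  · exact key.continuousAt ((isOpen_ne_fun continuous_snd continuous_const).mem_nhds hq)

/-- A map on a product of spheres that commutes with the antipodal map of each factor. -/
def BiOdd {E : Type*} [Neg E] (F : Sphere n × Sphere n → E) : Prop :=
  ∀ x y, F (-x, y) = -F (x, y) ∧ F (x, -y) = -F (x, y)

theorem exists_biOdd [NeZero n] (a : C(RealProj n × RealProj n, RealProj r)) (x₀ : RealProj n)
    (hleft : HasOddLift (a.comp (.prodMk (.const _ x₀) (.id _))))
    (hright : HasOddLift (a.comp (.prodMk (.id _) (.const _ x₀)))) :
    ∃ F : C(Sphere n × Sphere n, Sphere r), BiOdd F := by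
  obtain ⟨e, rfl⟩ := surjective_ofSphere x₀
  obtain ⟨b, hb_odd, hb⟩ := hright
  have exists_slice (x : Sphere n) : ∃ g : C(Sphere n, Sphere r), Function.Odd g ∧
      (∀ y, ofSphere (g y) = a (ofSphere x, ofSphere y)) ∧ g e = b x := by
    have hjoin : (ContinuousMap.const (RealProj n) (ofSphere e)).Homotopic
        (.const _ (ofSphere x)) :=
      ContinuousMap.homotopic_const_iff.2 (PathConnectedSpace.joined _ _)
    obtain ⟨g, hg_odd, hg⟩ := hleft.of_homotopic
      ((ContinuousMap.Homotopic.refl a).comp (hjoin.prodMk (.refl (.id _))))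
    rcases ofSphere_eq_iff.1 ((hg e).trans (hb x).symm) with h | h
    · exact ⟨g, hg_odd, hg, h⟩
    · exact ⟨-g, fun y ↦ by simp [hg_odd y], fun y ↦ by simpa using hg y, by simp [h]⟩
  choose g hg_odd hg hge using exists_slice
  have hg_neg (x : Sphere n) : ⇑(g (-x)) = -⇑(g x) :=
    isCoveringMap_ofSphere.eq_of_comp_eq (g (-x)).continuous (g x).continuous.neg
      (funext fun y ↦ by simp [hg]) e (by simp [hge, hb_odd x])
  have hcont : Continuous fun q : Sphere n × Sphere n ↦ g q.1 q.2 :=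
    continuous_of_odd_slices (f := a.comp (.prodMap ⟨ofSphere, continuous_ofSphere⟩
      ⟨ofSphere, continuous_ofSphere⟩)) hg_odd hg e (by simpa only [hge] using b.continuous)
  exact ⟨⟨_, hcont⟩, fun x y ↦ ⟨congrFun (hg_neg x) y, hg_odd x y⟩⟩

/-- The vector that moves linearly from the line of `x` at `t = 0` to the line of `y` at `t = 1`,
where `q = (x, y)`; the sign of `f (x, y)` decides between `y` and `-y`. -/
def motion (f : Sphere n × Sphere n → ℝ) (t : ℝ) (q : Sphere n × Sphere n) : Ambient n :=
  (1 - t) • |f q| • q.1.1 + t • f q • q.2.1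

theorem motion_half_eq_zero_iff {f : Sphere n × Sphere n → ℝ} {q : Sphere n × Sphere n} :
    motion f (1 / 2) q = 0 ↔ |f q| • q.1.1 + f q • q.2.1 = 0 := by
  have : motion f (1 / 2) q = (1 / 2 : ℝ) • (|f q| • q.1.1 + f q • q.2.1) := by
    unfold motion
    module
  rw [this, smul_eq_zero_iff_right (by norm_num)]

theorem motion_ne_zero {f : Sphere n × Sphere n → ℝ} {q : Sphere n × Sphere n}
    (h : motion f (1 / 2) q ≠ 0) (t : I) : motion f t q ≠ 0 := fun h_zero ↦
  h <| motion_half_eq_zero_iff.2 <| add_eq_zero_of_convexComb_eq_zero (by simp [norm_smul]) h_zero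

theorem BiOdd.exists_smul_motion_eq {f : Sphere n × Sphere n → ℝ} (hf : BiOdd f)
    {q q' : Sphere n × Sphere n}
    (h : Prod.map ofSphere ofSphere q = Prod.map ofSphere ofSphere q') :
    ∃ c : ℝˣ, ∀ t, c • motion f t q = motion f t q' := by
  obtain ⟨x, y⟩ := q
  obtain ⟨x', y'⟩ := q'
  have hleft : ∃ c : ℝˣ, ∀ t, c • motion f t (x, y) = motion f t (x', y) := by
    rcases ofSphere_eq_iff.1 (congrArg Prod.fst h) with rfl | rfl
    · exact ⟨1, fun t ↦ one_smul _ _⟩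
    · exact ⟨-1, fun t ↦ by simp [motion, Units.smul_def, (hf x' y).1]⟩
  have hright (t : ℝ) : motion f t (x', y) = motion f t (x', y') := by
    rcases ofSphere_eq_iff.1 (congrArg Prod.snd h) with rfl | rfl
    · rfl
    · simp [motion, (hf x' y').2]
  exact hleft.imp fun c hc t ↦ (hc t).trans (hright t)

theorem BiOdd.pathSecOn {f : C(Sphere n × Sphere n, ℝ)} (hf : BiOdd f) :
    PathSecOn (RealProj n) (Prod.map ofSphere ofSphere '' {q | motion f (1 / 2) q ≠ 0}) := by
  let π : Sphere n × Sphere n → RealProj n × RealProj n := Prod.map ofSphere ofSphere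
  let U : Set (RealProj n × RealProj n) := π '' {q | motion f (1 / 2) q ≠ 0}
  have hne (z : I × (π ⁻¹' U)) : motion f z.1 z.2 ≠ 0 := by
    obtain ⟨t, q, q', hq', hqq'⟩ := z
    obtain ⟨c, hc⟩ := hf.exists_smul_motion_eq hqq'
    exact motion_ne_zero (by rw [← hc]; exact (smul_ne_zero_iff_ne c).2 hq') t
  have hcont : Continuous fun z : I × (π ⁻¹' U) ↦ motion f z.1 z.2 := by
    unfold motion
    fun_prop
  let φ : C(I × (π ⁻¹' U), RealProj n) :=
    ⟨fun z ↦ mk ⟨motion f z.1 z.2, hne z⟩, continuous_mk.comp (hcont.subtype_mk _)⟩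
  have hquot : IsOpenQuotientMap (Prod.map id (U.restrictPreimage π) : I × (π ⁻¹' U) → I × U) :=
    .prodMap .id <|
      (isOpenQuotientMap_ofSphere.prodMap isOpenQuotientMap_ofSphere).restrictPreimage U
  have hφ : ∀ z z', Prod.map id (U.restrictPreimage π) z = Prod.map id (U.restrictPreimage π) z' →
      φ z = φ z' := by
    rintro ⟨t, q⟩ ⟨t', q'⟩ h
    obtain rfl : t = t' := congrArg Prod.fst h
    obtain ⟨c, hc⟩ := hf.exists_smul_motion_eq (congrArg (fun p ↦ p.2.1) h)
    exact mk_eq_mk_iff.2 ⟨c, hc t⟩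
  let H : C(I × U, RealProj n) := hquot.isQuotientMap.lift (f := ⟨_, hquot.continuous⟩) φ hφ
  have hH (t : I) (q : π ⁻¹' U) : H (t, U.restrictPreimage π q) = φ (t, q) :=
    DFunLike.congr_fun (hquot.isQuotientMap.lift_comp (f := ⟨_, hquot.continuous⟩) φ hφ) (t, q)
  have hsurj : Function.Surjective (U.restrictPreimage π) :=
    (surjective_ofSphere.prodMap surjective_ofSphere).restrictPreimage U
  refine pathSecOn_of_homotopic_s11 ⟨⟨H, hsurj.forall.2 fun q ↦ ?_, hsurj.forall.2 fun q ↦ ?_⟩⟩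
  · exact (hH 0 q).trans (mk_eq_ofSphere (c := |f q|) (by simp [motion]))
  · exact (hH 1 q).trans (mk_eq_ofSphere (c := f q) (by simp [motion]))

theorem topComplexity_le_of_biOdd {k : ℕ} {f : Fin k → C(Sphere n × Sphere n, ℝ)}
    (hf : ∀ i, BiOdd (f i)) (hf_ne : ∀ q, ∃ i, f i q ≠ 0) (hf_pos : ∀ x, ∃ i, 0 < f i (x, x)) :
    TopComplexity (RealProj n) ≤ k := by
  refine topComplexity_le_of_isOpen_cover (fun i ↦ ?_) (fun p ↦ ?_) fun i ↦ (hf i).pathSecOn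
  · have : Continuous (motion (f i) (1 / 2)) := by
      unfold motion
      fun_prop
    exact (isOpenQuotientMap_ofSphere.prodMap isOpenQuotientMap_ofSphere).isOpenMap _
      (isOpen_ne_fun this continuous_const)
  · obtain ⟨p, q⟩ := p
    obtain ⟨x, rfl⟩ := surjective_ofSphere p
    obtain ⟨y, rfl⟩ := surjective_ofSphere q
    by_cases hxy : ofSphere x = ofSphere y
    · obtain ⟨i, hi⟩ := hf_pos x
      refine ⟨i, (x, x), ?_, by simp [hxy]⟩
      rw [mem_ofPred_eq, ne_eq, motion_half_eq_zero_iff, abs_of_pos hi, ← add_smul]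
      exact smul_ne_zero (by positivity) (ne_zero_of_mem_unit_sphere x)
    · obtain ⟨i, hi⟩ := hf_ne (x, y)
      refine ⟨i, (x, y), fun h ↦ hxy (ofSphere_eq_iff.2 ?_), rfl⟩
      have hsum := motion_half_eq_zero_iff.1 h
      rcases abs_choice (f i (x, y)) with habs | habs
      · rw [habs, ← smul_add, smul_eq_zero_iff_right hi] at hsum
        exact .inr (Subtype.ext (eq_neg_of_add_eq_zero_left hsum))
      · rw [habs, neg_smul, ← smul_neg, ← smul_add, smul_eq_zero_iff_right hi] at hsum
        exact .inl (Subtype.ext (neg_add_eq_zero.1 hsum))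

section VectorValued

variable {V : Type*} [NormedAddCommGroup V] [NormedSpace ℝ V]

theorem BiOdd.even_diagonal {E : Type*} [InvolutiveNeg E] {F : Sphere n × Sphere n → E}
    (hF : BiOdd F) : Function.Even fun x ↦ F (x, x) := fun x ↦ by
  simp only [(hF x (-x)).1, (hF x x).2, neg_neg]

theorem BiOdd.exists_diagonal_eq {F : C(Sphere n × Sphere n, V)} (hF : BiOdd F)
    {p : C(Sphere n, V)} (hp : Function.Even p) :
    ∃ F' : C(Sphere n × Sphere n, V), BiOdd F' ∧ (∀ x, F' (x, x) = p x) ∧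
      ∀ q, ‖F' q - F q‖ ≤ ‖p q.1 - F (q.1, q.1)‖ := by
  have hF_even (x : Sphere n) : F (-x, -x) = F (x, x) := hF.even_diagonal x
  refine ⟨⟨fun q ↦ F q + inner ℝ q.1.1 q.2.1 • (p q.1 - F (q.1, q.1)), by fun_prop⟩,
    fun x y ↦ ⟨?_, ?_⟩, fun x ↦ ?_, fun q ↦ ?_⟩
  · simp only [ContinuousMap.coe_mk, hF_even, hp x, (hF x y).1, coe_neg_sphere,
      inner_neg_left, neg_smul, neg_add]
  · simp only [ContinuousMap.coe_mk, (hF x y).2, coe_neg_sphere, inner_neg_right, neg_smul,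
      neg_add]
  · simp
  · have hinner : |inner ℝ q.1.1 q.2.1| ≤ 1 := by
      simpa using abs_real_inner_le_norm q.1.1 q.2.1
    simpa [norm_smul] using mul_le_mul_of_nonneg_right hinner (norm_nonneg _)

variable [FiniteDimensional ℝ V]

theorem topComplexity_le_of_not_sameRay {F : C(Sphere n × Sphere n, V)} (hF : BiOdd F)
    (hF_ne : ∀ q, F q ≠ 0) {w : V} (hw : ∀ x, ¬SameRay ℝ w (F (x, x))) :
    TopComplexity (RealProj n) ≤ Module.finrank ℝ V := by
  obtain ⟨ε, hε, hball⟩ := Metric.isOpen_iff.1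
    (isOpen_setOf_forall_not_sameRay (F.comp (.prodMk (.id (Sphere n)) (.id _)))) w hw
  obtain ⟨b, hb⟩ := exists_basis_forall_mem (B := Metric.ball w ε) Metric.isOpen_ball
    (Metric.nonempty_ball.2 hε)
  have hcoord (i) : Continuous (b.coord i) := LinearMap.continuous_of_finiteDimensional _
  refine topComplexity_le_of_biOdd (f := fun i ↦ ⟨fun q ↦ -b.coord i (F q), by fun_prop⟩)
    (fun i x y ↦ ?_) (fun q ↦ ?_) (fun x ↦ ?_)
  · simp [hF x y]
  · by_contra! h
    exact hF_ne q (b.ext_elem fun i ↦ by simpa using h i)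
  · by_contra! h
    obtain ⟨u, hu, hray⟩ := exists_sameRay_of_repr_nonneg (convex_ball w ε) hb
      (hF_ne (x, x)) fun i ↦ by simpa using h i
    exact hball hu x hray

theorem exists_contDiff_even_approx {g : C(Sphere n, V)} (hg : Function.Even g) {ε : ℝ}
    (hε : 0 < ε) :
    ∃ P : Ambient n → V, ContDiff ℝ 1 P ∧ Function.Even P ∧ ∀ x : Sphere n, ‖P x - g x‖ < ε := by
  obtain ⟨G, hG⟩ := g.exists_restrict_eq Metric.isClosed_sphere
  have hG (x : Sphere n) : G x = g x := DFunLike.congr_fun hG x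
  obtain ⟨Q, hQ, hQG, -⟩ := G.continuous.exists_contDiff_approx 1 (ε := fun _ ↦ ε)
    continuous_const fun _ ↦ hε
  have hQg (x : Sphere n) : dist (Q x) (g x) < ε := hG x ▸ hQG x
  refine ⟨fun x ↦ midpoint ℝ (Q x) (Q (-x)), ?_, fun x ↦ ?_, fun x ↦ ?_⟩
  · have hQ : ContDiff ℝ 1 Q := by exact_mod_cast hQ
    simp only [midpoint_eq_smul_add]
    exact (hQ.add (hQ.comp contDiff_neg)).const_smul _
  · simp [midpoint_comm]
  · have hQg_neg : dist (Q (-x)) (g x) < ε := hg x ▸ hQg (-x)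
    rw [← dist_eq_norm, ← midpoint_self ℝ (g x)]
    linarith [dist_midpoint_midpoint_le (Q x) (Q (-x)) (g x) (g x), hQg x]

-- The rays through the points `P x` sweep out a `C¹` image of `ℝⁿ⁺¹ \ {0}`, which has Hausdorff
-- dimension less than `dim V`.
theorem exists_forall_not_sameRay {P : Ambient n → V} (hP : ContDiff ℝ 1 P)
    (hP_ne : ∀ x : Sphere n, P x ≠ 0) (hn : n + 1 < Module.finrank ℝ V) :
    ∃ w, ∀ x : Sphere n, ¬SameRay ℝ w (P x) := by
  let f (v : Ambient n) : V := ‖v‖ • P (‖v‖⁻¹ • v)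
  have hf (v : Ambient n) (hv : v ≠ 0) : ContDiffAt ℝ 1 f v := by
    have hnorm : ContDiffAt ℝ 1 norm v := contDiffAt_norm ℝ hv
    have hunit : ContDiffAt ℝ 1 (fun v : Ambient n ↦ ‖v‖⁻¹ • v) v :=
      (hnorm.inv (norm_ne_zero_iff.2 hv)).smul contDiffAt_id
    exact hnorm.smul (hP.contDiffAt.comp v hunit)
  have hdim : dimH (f '' {0}ᶜ) < Module.finrank ℝ V := calc
    dimH (f '' {0}ᶜ) ≤ dimH ({0}ᶜ : Set (Ambient n)) := by
      refine dimH_image_le_of_locally_lipschitzOn fun v hv ↦ ?_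
      obtain ⟨K, t, ht, hK⟩ := (hf v hv).exists_lipschitzOnWith
      exact ⟨K, t, mem_nhdsWithin_of_mem_nhds ht, hK⟩
    _ ≤ dimH (univ : Set (Ambient n)) := dimH_mono (subset_univ _)
    _ = (n + 1 : ℕ) := by rw [Real.dimH_univ_eq_finrank, finrank_euclideanSpace_fin]
    _ < Module.finrank ℝ V := by exact_mod_cast hn
  have : Nontrivial V := Module.nontrivial_of_finrank_pos (R := ℝ) (by omega)
  obtain ⟨w, hw_ne, hw⟩ := (dense_compl_of_dimH_lt_finrank hdim).inter_open_nonempty _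
    isOpen_compl_singleton (exists_ne (0 : V))
  refine ⟨w, fun x hray ↦ hw ?_⟩
  obtain ⟨c, hc, rfl⟩ := hray.exists_pos_right hw_ne (hP_ne x)
  refine ⟨c • x.1, smul_ne_zero hc.ne' (ne_zero_of_mem_unit_sphere x), ?_⟩
  simp [f, norm_smul, abs_of_pos hc, hc.ne']

end VectorValued

theorem BiOdd.topComplexity_le {F : C(Sphere n × Sphere n, Sphere r)} (hF : BiOdd F)
    (hnr : n < r) : TopComplexity (RealProj n) ≤ (r + 1 : ℕ) := by
  let f : C(Sphere n × Sphere n, Ambient r) := ⟨fun q ↦ F q, by fun_prop⟩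
  have hf : BiOdd f := fun x y ↦
    ⟨congrArg Subtype.val (hF x y).1, congrArg Subtype.val (hF x y).2⟩
  obtain ⟨P, hP, hP_even, hPf⟩ := exists_contDiff_even_approx
    (g := f.comp (.prodMk (.id _) (.id _))) hf.even_diagonal one_pos
  have hP_cont := hP.continuous
  obtain ⟨f', hf', hf'_diag, hf'_sub⟩ := hf.exists_diagonal_eq
    (p := ⟨fun x ↦ P x, by fun_prop⟩) fun x ↦ hP_even x
  have hf'_diag (x : Sphere n) : f' (x, x) = P x := hf'_diag x
  have hf'_ne (q) : f' q ≠ 0 := fun h ↦ by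
    have hlt := (hf'_sub q).trans_lt (hPf q.1)
    simp [h, f] at hlt
  obtain ⟨w, hw⟩ := exists_forall_not_sameRay hP (fun x ↦ hf'_diag x ▸ hf'_ne (x, x))
    (by simpa using hnr)
  simpa using topComplexity_le_of_not_sameRay hf' hf'_ne fun x ↦ hf'_diag x ▸ hw x

end RealProj

/-- If `n ≤ r` are positive and there is an axial map `a : Pⁿ × Pⁿ → P^r` (its
restrictions to the two factors are homotopic to the standard inclusion `Pⁿ ↪ P^r`),
then `TC(Pⁿ) ≤ r + 1`. -/
theorem topComplexity_realProj_le_of_axial (n r : ℕ) (hn : 0 < n) (hnr : n ≤ r)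
    (a : RealProj n × RealProj n → RealProj r) (ha : Continuous a)
    (haxial : ∃ x₀ : RealProj n,
      FnHomotopic (fun x => a (x₀, x)) (projIncl n r hnr) ∧
      FnHomotopic (fun x => a (x, x₀)) (projIncl n r hnr)) :
    TopComplexity (RealProj n) ≤ ((r + 1 : ℕ) : ℕ∞) := by
  have : NeZero n := ⟨hn.ne'⟩
  obtain ⟨x₀, hleft, hright⟩ := haxial
  let a' : C(RealProj n × RealProj n, RealProj r) := ⟨a, ha⟩
  let ι : C(RealProj n, RealProj r) := ⟨projIncl n r hnr, RealProj.continuous_projIncl hnr⟩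
  have hleft : (a'.comp (.prodMk (.const _ x₀) (.id _))).Homotopic ι := hleft.homotopic
  have hright : (a'.comp (.prodMk (.id _) (.const _ x₀))).Homotopic ι := hright.homotopic
  rcases hnr.lt_or_eq with hlt | rfl
  · have hι : RealProj.HasOddLift ι := RealProj.hasOddLift_projIncl hnr
    obtain ⟨F, hF⟩ := RealProj.exists_biOdd a' x₀ (hι.of_homotopic hleft.symm)
      (hι.of_homotopic hright.symm)
    exact hF.topComplexity_le hlt
  · have hι : ι = .id _ := ContinuousMap.ext fun x ↦ congrFun (RealProj.projIncl_self n) x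
    rw [hι] at hleft hright
    exact (topComplexity_le_lsCat a' x₀ hleft hright).trans RealProj.lsCat_le
end
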